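/- arXiv:1703.08435 — 9 statements merged into one kernel-verified Lean document; each statement's English description precedes it below -/
import Mathlib

section
/- Let κ be a finite measure on ℝ, let m ≥ 1 be an integer, and let ψ_1,…,ψ_m, φ_1,…,φ_m : ℝ → ℝ be bounded measurable functions. Then ∫_{ℝ^m} det(ψ_i(x_j))_{i,j=1}^m · det(φ_i(x_j))_{i,j=1}^m dκ(x_1)⋯dκ(x_m) = m! · det( ∫_ℝ ψ_i(x) φ_j(x) dκ(x) )_{i,j=1}^m. -/
open MeasureTheory

/-- Integral Cauchy–Binet (Andréief) formula: for a finite measure `κ` on `ℝ` and bounded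
measurable functions `ψ i, φ i : ℝ → ℝ`, `i = 1, …, m`, the `m`-fold integral of the product of
the two determinants `det(ψ i (x j))` and `det(φ i (x j))` with respect to the product measure
equals `m!` times the determinant of the matrix of pairwise integrals `∫ ψ i · φ j dκ`. -/
theorem integral_cauchy_binet (m : ℕ) (hm : 1 ≤ m)
    (κ : Measure ℝ) [IsFiniteMeasure κ]
    (ψ φ : Fin m → ℝ → ℝ)
    (hψmeas : ∀ i, Measurable (ψ i)) (hφmeas : ∀ i, Measurable (φ i))
    (hψbdd : ∀ i, ∃ C : ℝ, ∀ x : ℝ, |ψ i x| ≤ C)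
    (hφbdd : ∀ i, ∃ C : ℝ, ∀ x : ℝ, |φ i x| ≤ C) :
    ∫ x : Fin m → ℝ,
        (Matrix.of fun i j : Fin m => ψ i (x j)).det *
          (Matrix.of fun i j : Fin m => φ i (x j)).det
        ∂(Measure.pi fun _ : Fin m => κ)
      = (Nat.factorial m : ℝ) *
        (Matrix.of fun i j : Fin m => ∫ x : ℝ, ψ i x * φ j x ∂κ).det := by
  have hint : ∀ i j, Integrable (fun x => ψ i x * φ j x) κ := by
    intro i j
    obtain ⟨C, hC⟩ := hψbdd i
    obtain ⟨D, hD⟩ := hφbdd j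
    refine Integrable.of_bound ((hψmeas i).mul (hφmeas j)).aestronglyMeasurable (C * D)
      (Filter.Eventually.of_forall fun x => ?_)
    rw [Real.norm_eq_abs, abs_mul]
    exact mul_le_mul (hC x) (hD x) (abs_nonneg _) ((abs_nonneg _).trans (hC x))
  have hint2 : ∀ τ σ : Equiv.Perm (Fin m), Integrable (fun x : Fin m → ℝ =>
      (((Equiv.Perm.sign τ : ℤ) : ℝ) * ((Equiv.Perm.sign σ : ℤ) : ℝ)) *
        ∏ i, (ψ (σ i) (x i) * φ (τ i) (x i))) (Measure.pi fun _ : Fin m => κ) := by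
    intro τ σ
    exact (Integrable.fintype_prod (f := fun i y => ψ (σ i) y * φ (τ i) y)
      (fun i => hint (σ i) (τ i))).const_mul _
  have hexp : ∀ x : Fin m → ℝ, (Matrix.of fun i j : Fin m => ψ i (x j)).det *
      (Matrix.of fun i j : Fin m => φ i (x j)).det =
      ∑ τ : Equiv.Perm (Fin m), ∑ σ : Equiv.Perm (Fin m),
        (((Equiv.Perm.sign τ : ℤ) : ℝ) * ((Equiv.Perm.sign σ : ℤ) : ℝ)) *
        ∏ i, (ψ (σ i) (x i) * φ (τ i) (x i)) := by
    intro x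
    rw [Matrix.det_apply', Matrix.det_apply', Finset.sum_mul_sum, Finset.sum_comm]
    refine Finset.sum_congr rfl fun τ _ => Finset.sum_congr rfl fun σ _ => ?_
    simp only [Matrix.of_apply, Finset.prod_mul_distrib]
    ring
  simp_rw [hexp]
  rw [integral_finsetSum _ fun τ _ => integrable_finsetSum _ fun σ _ => hint2 τ σ]
  have key : ∀ τ : Equiv.Perm (Fin m), ∫ x : Fin m → ℝ, ∑ σ : Equiv.Perm (Fin m),
        (((Equiv.Perm.sign τ : ℤ) : ℝ) * ((Equiv.Perm.sign σ : ℤ) : ℝ)) *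
        ∏ i, (ψ (σ i) (x i) * φ (τ i) (x i)) ∂(Measure.pi fun _ : Fin m => κ) =
        (Matrix.of fun i j : Fin m => ∫ x : ℝ, ψ i x * φ j x ∂κ).det := by
    intro τ
    rw [integral_finsetSum _ fun σ _ => hint2 τ σ]
    have h := Matrix.det_permute' τ (Matrix.of fun i j : Fin m => ∫ x : ℝ, ψ i x * φ j x ∂κ)
    have hs : ((Equiv.Perm.sign τ : ℤ) : ℝ) * ((Equiv.Perm.sign τ : ℤ) : ℝ) = 1 := by
      rcases Int.units_eq_one_or (Equiv.Perm.sign τ) with h | h <;> simp [h]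
    rw [← one_mul (Matrix.det _), ← hs, mul_assoc, ← h, Matrix.det_apply', Finset.mul_sum]
    refine Finset.sum_congr rfl fun σ _ => ?_
    rw [integral_const_mul,
      integral_fintype_prod_eq_prod (fun i y => ψ (σ i) y * φ (τ i) y), mul_assoc]
    rfl
  rw [Finset.sum_congr rfl fun τ _ => key τ, Finset.sum_const, Finset.card_univ,
    Fintype.card_perm, Fintype.card_fin, nsmul_eq_mul]
end

section
/- Let m > n ≥ 1 be integers and r, s > −1 be real numbers. For each N ∈ ℕ let p_N : ℝ → ℝ be a polynomial such that ∫_0^1 x^j p_N(x) x^r (1−x)^s dx = 0 for every integer 0 ≤ j < N. Fix 0 ≤ k ≤ n−1 and let α = (n−k, 1^k, 0^{m−k−1}) be the hook partition with α_1 = n−k, α_2 = ⋯ = α_{k+1} = 1 and α_i = 0 for i > k+1. Then for any partition τ = (τ_1 ≥ τ_2 ≥ ⋯ ≥ τ_m ≥ 0) of nonnegative integers such that τ_i > α_i for some 1 ≤ i ≤ m, the determinant det( ∫_0^1 x^{α_j + m − j} p_{τ_i + m − i}(x) x^r (1−x)^s dx )_{i,j=1}^m equals 0. -/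
open MeasureTheory

/-- Let `m > n ≥ 1`, `r, s > -1`, and for each `N` let `p N` be a polynomial orthogonal to all
monomials `x ^ j`, `j < N`, with respect to the weight `x ^ r * (1 - x) ^ s` on `(0,1)`.
Let `α = (n - k, 1^k, 0^{m-k-1})` be a hook partition (`0 ≤ k ≤ n - 1`).  Then for any partition
`τ = (τ_1 ≥ ⋯ ≥ τ_m ≥ 0)` such that `τ_i > α_i` for some `i`, the determinant
`det(∫_0^1 x^{α_j + m - j} p_{τ_i + m - i}(x) x^r (1-x)^s dx)` vanishes.
Indices `i, j : Fin m` correspond to `i + 1, j + 1 ∈ {1, …, m}`, so `m - j` reads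
`m - 1 - j.val`. -/
theorem det_vanishes_unless_subset_hook (m n : ℕ) (hn : 1 ≤ n) (hmn : n < m)
    (r s : ℝ) (hr : -1 < r) (hs : -1 < s)
    (p : ℕ → Polynomial ℝ)
    (horth : ∀ N : ℕ, ∀ j : ℕ, j < N →
      ∫ x in (0:ℝ)..1, (x ^ j * (p N).eval x) * (x ^ r * (1 - x) ^ s) = 0)
    (k : ℕ) (hk : k ≤ n - 1)
    (α : Fin m → ℕ)
    (hα : ∀ i : Fin m, α i = if i.val = 0 then n - k else if i.val ≤ k then 1 else 0)
    (τ : Fin m → ℕ) (hτ : Antitone τ)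
    (hnotsub : ∃ i : Fin m, α i < τ i) :
    (Matrix.of fun i j : Fin m =>
        ∫ x in (0:ℝ)..1,
          (x ^ (α j + (m - 1 - j.val)) * (p (τ i + (m - 1 - i.val))).eval x) *
            (x ^ r * (1 - x) ^ s)).det = 0 := by
  obtain ⟨i₀, hi₀⟩ := hnotsub
  rw [Matrix.det_apply]
  refine Finset.sum_eq_zero fun σ _ => ?_
  obtain ⟨j, hj, hσ⟩ : ∃ j : Fin m, i₀ ≤ j ∧ σ j ≤ i₀ := by
    by_contra! h
    have hc : (Finset.Ici i₀).card ≤ (Finset.Ioi i₀).card :=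
      Finset.card_le_card_of_injOn σ
        (fun j hj => by
          have hj' : i₀ ≤ j := by simpa using hj
          simpa using h j hj')
        (σ.injective.injOn)
    have := i₀.isLt
    rw [Fin.card_Ici, Fin.card_Ioi] at hc
    omega
  have h1 : τ i₀ ≤ τ (σ j) := hτ hσ
  have h2 : α j ≤ α i₀ := by
    have hj' : i₀.val ≤ j.val := hj
    rw [hα, hα]
    split_ifs <;> omega
  have h3 : i₀.val ≤ j.val := hj
  have h4 : (σ j).val ≤ i₀.val := hσ
  rw [Finset.prod_eq_zero (Finset.mem_univ j), smul_zero]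
  exact horth _ _ (by omega)
end

section
/- Let m > n ≥ 1 be integers and r, s > −1 be real numbers. For each N ∈ ℕ let p_N : ℝ → ℝ be a polynomial such that ∫_0^1 x^j p_N(x) x^r (1−x)^s dx = 0 for every integer 0 ≤ j < N. Fix 0 ≤ k ≤ n−1 and let α = (n−k, 1^k, 0^{m−k−1}) be the hook partition. Then for any partition τ = (τ_1 ≥ ⋯ ≥ τ_m ≥ 0) such that τ_i > α_i for some 1 ≤ i ≤ m, the multiple integral ∫_{[0,1]^m} det(λ_j^{α_i + m − i})_{i,j=1}^m · det( p_{τ_i + m − i}(λ_j) )_{i,j=1}^m · ∏_{i=1}^m λ_i^r (1−λ_i)^s dλ_1 ⋯ dλ_m equals 0. -/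
open MeasureTheory

lemma weight_integrable (r s : ℝ) (hr : -1 < r) (hs : -1 < s) :
    IntervalIntegrable (fun x : ℝ => x ^ r * (1 - x) ^ s) volume 0 1 := by
  have h := Complex.betaIntegral_convergent (u := ((r + 1 : ℝ) : ℂ)) (v := ((s + 1 : ℝ) : ℂ))
    (by rw [Complex.ofReal_re]; linarith) (by rw [Complex.ofReal_re]; linarith)
  have h2 := h.norm
  refine h2.congr_ae ?_
  have h1 : ∀ᵐ x : ℝ ∂(volume.restrict (Set.uIoc (0:ℝ) 1)), x ≠ 1 :=
    ae_restrict_of_ae (Measure.ae_ne volume 1)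
  filter_upwards [h1, ae_restrict_mem measurableSet_uIoc] with x hx1 hx
  rw [Set.uIoc_of_le zero_le_one] at hx
  have hx0 : 0 < x := hx.1
  have hx2 : 0 < 1 - x := by
    have := lt_of_le_of_ne hx.2 hx1
    linarith
  rw [norm_mul]
  congr 1
  · rw [Complex.norm_cpow_eq_rpow_re_of_pos hx0]
    simp
  · have : (1 - (x:ℂ)) = ((1 - x : ℝ) : ℂ) := by push_cast; rfl
    rw [this, Complex.norm_cpow_eq_rpow_re_of_pos hx2]
    simp

lemma exists_perm_cross {m : ℕ} (ρ π : Equiv.Perm (Fin m)) (i0 : Fin m) :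
    ∃ j, π j ≤ i0 ∧ i0 ≤ ρ j := by
  by_contra! h
  have hsub : (Finset.Iic i0).image (ρ ∘ π.symm) ⊆ Finset.Iio i0 := by
    intro y hy
    obtain ⟨i, hi, rfl⟩ := Finset.mem_image.1 hy
    rw [Finset.mem_Iio]
    exact h _ (by simpa using hi)
  have hc := Finset.card_le_card hsub
  rw [Finset.card_image_of_injective _ (ρ.injective.comp π.symm.injective)] at hc
  simp at hc


/-- Let `m > n ≥ 1`, `r, s > -1`, and for each `N` let `p N` be a polynomial orthogonal to all
monomials `x ^ j`, `j < N`, with respect to the weight `x ^ r * (1 - x) ^ s` on `(0,1)`.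
Let `α = (n - k, 1^k, 0^{m-k-1})` be a hook partition (`0 ≤ k ≤ n - 1`).  Then for any partition
`τ = (τ_1 ≥ ⋯ ≥ τ_m ≥ 0)` with `τ_i > α_i` for some `i`, the multiple integral over `[0,1]^m` of
`det(λ_j^{α_i + m - i}) · det(p_{τ_i + m - i}(λ_j)) · ∏_i λ_i^r (1 - λ_i)^s` vanishes.
Indices `i, j : Fin m` correspond to `i + 1, j + 1 ∈ {1, …, m}`, so `m - i` reads
`m - 1 - i.val`. -/
theorem integral_schur_jacobi_vanishes_unless_subset_hook (m n : ℕ) (hn : 1 ≤ n) (hmn : n < m)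
    (r s : ℝ) (hr : -1 < r) (hs : -1 < s)
    (p : ℕ → Polynomial ℝ)
    (horth : ∀ N : ℕ, ∀ j : ℕ, j < N →
      ∫ x in (0:ℝ)..1, (x ^ j * (p N).eval x) * (x ^ r * (1 - x) ^ s) = 0)
    (k : ℕ) (hk : k ≤ n - 1)
    (α : Fin m → ℕ)
    (hα : ∀ i : Fin m, α i = if i.val = 0 then n - k else if i.val ≤ k then 1 else 0)
    (τ : Fin m → ℕ) (hτ : Antitone τ)
    (hnotsub : ∃ i : Fin m, α i < τ i) :
    ∫ x : Fin m → ℝ,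
        (Matrix.of fun i j : Fin m => x j ^ (α i + (m - 1 - i.val))).det *
          (Matrix.of fun i j : Fin m => (p (τ i + (m - 1 - i.val))).eval (x j)).det *
          ∏ i : Fin m, x i ^ r * (1 - x i) ^ s
        ∂(Measure.pi fun _ : Fin m => volume.restrict (Set.Ioc (0:ℝ) 1)) = 0 := by
  classical
  obtain ⟨i0, hi0⟩ := hnotsub
  set a : Fin m → ℕ := fun i => α i + (m - 1 - i.val) with ha
  set b : Fin m → ℕ := fun i => τ i + (m - 1 - i.val) with hb
  set w : ℝ → ℝ := fun x => x ^ r * (1 - x) ^ s with hw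
  have hαanti : ∀ i j : Fin m, i ≤ j → α j ≤ α i := by
    intro i j hij
    have hij' : i.val ≤ j.val := hij
    rw [hα, hα]
    split_ifs <;> omega
  have hint : ∀ c d : ℕ, Integrable (fun x : ℝ => (x ^ c * (p d).eval x) * w x)
      (volume.restrict (Set.Ioc (0:ℝ) 1)) := by
    intro c d
    have h := (weight_integrable r s hr hs).continuousOn_mul
      (g := fun x : ℝ => x ^ c * (p d).eval x)
      (by
        apply Continuous.continuousOn
        exact (continuous_pow c).mul (p d).continuous)
    exact (intervalIntegrable_iff_integrableOn_Ioc_of_le zero_le_one).1 h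
  have hzero : ∀ c d : ℕ, c < d → ∫ x in Set.Ioc (0:ℝ) 1, (x ^ c * (p d).eval x) * w x = 0 := by
    intro c d hcd
    rw [← intervalIntegral.integral_of_le zero_le_one]
    exact horth d c hcd
  have hexp : ∀ x : Fin m → ℝ,
      (Matrix.of fun i j : Fin m => x j ^ (a i)).det *
          (Matrix.of fun i j : Fin m => (p (b i)).eval (x j)).det *
          ∏ i : Fin m, x i ^ r * (1 - x i) ^ s
      = ∑ σ : Equiv.Perm (Fin m), ∑ π : Equiv.Perm (Fin m),
          (((Equiv.Perm.sign σ : ℤ) : ℝ) * ((Equiv.Perm.sign π : ℤ) : ℝ)) *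
            ∏ j : Fin m, ((x j ^ (a (σ j)) * (p (b (π j))).eval (x j)) * w (x j)) := by
    intro x
    rw [Matrix.det_apply', Matrix.det_apply', Finset.sum_mul_sum, Finset.sum_mul]
    refine Finset.sum_congr rfl fun σ _ => ?_
    rw [Finset.sum_mul]
    refine Finset.sum_congr rfl fun π _ => ?_
    simp only [Matrix.of_apply, Finset.prod_mul_distrib, hw]
    ring
  have hI : ∀ σ π : Equiv.Perm (Fin m), Integrable (fun x : Fin m → ℝ =>
      (((Equiv.Perm.sign σ : ℤ) : ℝ) * ((Equiv.Perm.sign π : ℤ) : ℝ)) *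
            ∏ j : Fin m, ((x j ^ (a (σ j)) * (p (b (π j))).eval (x j)) * w (x j)))
      (Measure.pi fun _ : Fin m => volume.restrict (Set.Ioc (0:ℝ) 1)) := by
    intro σ π
    apply Integrable.const_mul
    exact Integrable.fintype_prod
      (f := fun j : Fin m => fun y : ℝ => (y ^ (a (σ j)) * (p (b (π j))).eval y) * w y)
      (fun j => hint _ _)
  rw [integral_congr_ae (Filter.Eventually.of_forall hexp)]
  rw [integral_finsetSum _ (fun σ _ => integrable_finsetSum _ fun π _ => hI σ π)]
  refine Finset.sum_eq_zero fun σ _ => ?_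
  rw [integral_finsetSum _ (fun π _ => hI σ π)]
  refine Finset.sum_eq_zero fun π _ => ?_
  rw [integral_const_mul]
  rw [integral_fintype_prod_eq_prod
    (f := fun j : Fin m => fun y : ℝ => (y ^ (a (σ j)) * (p (b (π j))).eval y) * w y)]
  obtain ⟨j, hj1, hj2⟩ := exists_perm_cross σ π i0
  rw [Finset.prod_eq_zero (Finset.mem_univ j), mul_zero]
  apply hzero
  have h1 := hαanti _ _ hj2
  have h2 := hτ hj1
  have h3 : (π j).val ≤ i0.val := hj1
  have h4 : i0.val ≤ (σ j).val := hj2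
  simp only [ha, hb]
  omega
end

section
/- Let m ≥ 1 be an integer, r, s > −1 real numbers, and let α = (α_1, …, α_m) and μ = (μ_1, …, μ_m) be m-tuples of nonnegative integers. Then ∫_{[0,1]^m} det( x_j^{α_i + m − i} )_{i,j=1}^m · det( x_j^{μ_i + m − i} )_{i,j=1}^m · ∏_{i=1}^m x_i^r (1−x_i)^s dx_1 ⋯ dx_m = m! · det( B(α_i + μ_j + 2m − i − j + r + 1, s + 1) )_{i,j=1}^m, where B(a,b) = Γ(a)Γ(b)/Γ(a+b) denotes the Euler Beta function (Γ is the real Gamma function), equivalently B(a,b) = ∫_0^1 t^{a−1}(1−t)^{b−1} dt. -/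
open MeasureTheory

/-- The Euler Beta function `B(a,b) = Γ(a)Γ(b)/Γ(a+b)`. -/
noncomputable def eulerBeta (a b : ℝ) : ℝ := Real.Gamma a * Real.Gamma b / Real.Gamma (a + b)

theorem beta_integrable_aux (a b : ℝ) (ha : 0 < a) (hb : 0 < b) :
    Integrable (fun x : ℝ => x ^ (a - 1) * (1 - x) ^ (b - 1))
      (volume.restrict (Set.Ioc (0:ℝ) 1)) ∧
    ∫ x in Set.Ioc (0:ℝ) 1, x ^ (a - 1) * (1 - x) ^ (b - 1) = eulerBeta a b := by
  have hc := Complex.betaIntegral_convergent (u := a) (v := b) (by simpa) (by simpa)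
  rw [intervalIntegrable_iff_integrableOn_Ioc_of_le (by simp), IntegrableOn] at hc
  have heq : ∀ x ∈ Set.Ioc (0:ℝ) 1,
      RCLike.re ((x : ℂ) ^ ((a : ℂ) - 1) * (1 - (x : ℂ)) ^ ((b : ℂ) - 1))
        = x ^ (a - 1) * (1 - x) ^ (b - 1) := by
    intro x ⟨hx1, hx2⟩
    norm_cast
    rw [← Complex.ofReal_cpow, ← Complex.ofReal_cpow, RCLike.re_to_complex,
      Complex.re_mul_ofReal, Complex.ofReal_re]
    all_goals linarith
  constructor
  · refine hc.re.congr ?_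
    exact ae_restrict_of_forall_mem measurableSet_Ioc heq
  · have := ProbabilityTheory.beta_eq_betaIntegralReal a b ha hb
    rw [ProbabilityTheory.beta, Complex.betaIntegral,
      intervalIntegral.integral_of_le (by norm_num), ← RCLike.re_to_complex,
      ← integral_re hc] at this
    rw [eulerBeta, this]
    exact (setIntegral_congr_fun measurableSet_Ioc heq).symm

theorem andreief_aux (m : ℕ) (ν : Measure ℝ) [SigmaFinite ν] (f g : Fin m → ℝ → ℝ) (w : ℝ → ℝ)
    (h : ∀ i j, Integrable (fun x => f i x * g j x * w x) ν) :
    ∫ x : Fin m → ℝ, (Matrix.of fun i j : Fin m => f i (x j)).det *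
        (Matrix.of fun i j : Fin m => g i (x j)).det * ∏ i : Fin m, w (x i)
        ∂(Measure.pi fun _ : Fin m => ν)
      = (Nat.factorial m : ℝ) *
        (Matrix.of fun i j : Fin m => ∫ x, f i x * g j x * w x ∂ν).det := by
  have hexp : ∀ x : Fin m → ℝ, (Matrix.of fun i j : Fin m => f i (x j)).det *
        (Matrix.of fun i j : Fin m => g i (x j)).det * ∏ i : Fin m, w (x i)
      = ∑ τ : Equiv.Perm (Fin m), ∑ σ : Equiv.Perm (Fin m),
          (((Equiv.Perm.sign τ : ℤ) : ℝ) * ((Equiv.Perm.sign σ : ℤ) : ℝ)) *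
            ∏ j, (f (σ j) (x j) * g (τ j) (x j) * w (x j)) := by
    intro x
    rw [Matrix.det_apply', Matrix.det_apply', Finset.sum_mul_sum, Finset.sum_comm, Finset.sum_mul]
    refine Finset.sum_congr rfl fun τ _ => ?_
    rw [Finset.sum_mul]
    refine Finset.sum_congr rfl fun σ _ => ?_
    simp only [Matrix.of_apply, Finset.prod_mul_distrib]
    ring
  simp_rw [hexp]
  have hint : ∀ τ σ : Equiv.Perm (Fin m), Integrable (fun x : Fin m → ℝ =>
      (((Equiv.Perm.sign τ : ℤ) : ℝ) * ((Equiv.Perm.sign σ : ℤ) : ℝ)) *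
            ∏ j, (f (σ j) (x j) * g (τ j) (x j) * w (x j)))
        (Measure.pi fun _ : Fin m => ν) := by
    intro τ σ
    refine Integrable.const_mul ?_ _
    exact Integrable.fintype_prod
      (f := fun j y => f (σ j) y * g (τ j) y * w y) (fun j => h (σ j) (τ j))
  rw [integral_finsetSum _ (fun τ _ => integrable_finsetSum _ (fun σ _ => hint τ σ))]
  set M : Matrix (Fin m) (Fin m) ℝ := Matrix.of fun i j => ∫ x, f i x * g j x * w x ∂ν with hM
  have hτ : ∀ τ : Equiv.Perm (Fin m),
      ∫ x : Fin m → ℝ, ∑ σ : Equiv.Perm (Fin m),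
          (((Equiv.Perm.sign τ : ℤ) : ℝ) * ((Equiv.Perm.sign σ : ℤ) : ℝ)) *
            ∏ j, (f (σ j) (x j) * g (τ j) (x j) * w (x j)) ∂(Measure.pi fun _ : Fin m => ν)
        = M.det := by
    intro τ
    rw [integral_finsetSum _ (fun σ _ => hint τ σ)]
    have h2 : M.det = ((Equiv.Perm.sign τ : ℤ) : ℝ) * (M.submatrix id τ).det := by
      rw [Matrix.det_permute', ← mul_assoc, ← Int.cast_mul, ← Units.val_mul, Int.units_mul_self]
      simp
    rw [h2, Matrix.det_apply', Finset.mul_sum]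
    refine Finset.sum_congr rfl fun σ _ => ?_
    rw [integral_const_mul, mul_assoc,
      integral_fintype_prod_eq_prod (fun j y => f (σ j) y * g (τ j) y * w y)]
    simp [hM]
  rw [Finset.sum_congr rfl (fun τ _ => hτ τ)]
  simp [Fintype.card_perm]

/-- For `m ≥ 1`, `r, s > -1` and `m`-tuples of nonnegative integers `α, μ`, the integral over
`[0,1]^m` of `det(x_j^{α_i + m - i}) · det(x_j^{μ_i + m - i}) · ∏_i x_i^r (1 - x_i)^s` equals
`m! · det(B(α_i + μ_j + 2m - i - j + r + 1, s + 1))`, where `B` is the Euler Beta function.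
Indices `i, j : Fin m` correspond to `i + 1, j + 1 ∈ {1, …, m}`, so
`2m - i - j` reads `(m - 1 - i.val) + (m - 1 - j.val)`. -/
theorem integral_two_schur_eq_det_beta (m : ℕ) (hm : 1 ≤ m)
    (r s : ℝ) (hr : -1 < r) (hs : -1 < s) (α μ : Fin m → ℕ) :
    ∫ x : Fin m → ℝ,
        (Matrix.of fun i j : Fin m => x j ^ (α i + (m - 1 - i.val))).det *
          (Matrix.of fun i j : Fin m => x j ^ (μ i + (m - 1 - i.val))).det *
          ∏ i : Fin m, x i ^ r * (1 - x i) ^ s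
        ∂(Measure.pi fun _ : Fin m => volume.restrict (Set.Ioc (0:ℝ) 1))
      = (Nat.factorial m : ℝ) *
        (Matrix.of fun i j : Fin m =>
          eulerBeta (((α i + μ j + (m - 1 - i.val) + (m - 1 - j.val) + 1 : ℕ) : ℝ) + r)
            (s + 1)).det := by
  have key : ∀ i j : Fin m, ∀ x ∈ Set.Ioc (0:ℝ) 1,
      x ^ ((((α i + μ j + (m - 1 - i.val) + (m - 1 - j.val) + 1 : ℕ) : ℝ) + r) - 1) *
        (1 - x) ^ ((s + 1) - 1)
      = x ^ (α i + (m - 1 - i.val)) * x ^ (μ j + (m - 1 - j.val)) * (x ^ r * (1 - x) ^ s) := by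
    intro i j x hx
    rw [← pow_add, ← Real.rpow_natCast, ← mul_assoc, ← Real.rpow_add hx.1, add_sub_cancel_right]
    congr 2
    generalize m - 1 - i.val = p
    generalize m - 1 - j.val = q
    push_cast
    ring
  have hB := fun i j : Fin m => beta_integrable_aux
    (((α i + μ j + (m - 1 - i.val) + (m - 1 - j.val) + 1 : ℕ) : ℝ) + r) (s + 1)
    (by
      have : (0:ℝ) ≤ ((α i + μ j + (m - 1 - i.val) + (m - 1 - j.val) : ℕ) : ℝ) := Nat.cast_nonneg _
      rw [Nat.cast_add_one]
      linarith) (by linarith)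
  have := andreief_aux m (volume.restrict (Set.Ioc (0:ℝ) 1))
    (fun i x => x ^ (α i + (m - 1 - i.val))) (fun i x => x ^ (μ i + (m - 1 - i.val)))
    (fun x => x ^ r * (1 - x) ^ s)
    (fun i j => (hB i j).1.congr (ae_restrict_of_forall_mem measurableSet_Ioc (key i j)))
  rw [this]
  congr 2
  ext i j
  simp only [Matrix.of_apply]
  rw [← (hB i j).2]
  exact (setIntegral_congr_fun measurableSet_Ioc (key i j)).symm
end

section
/- Let m ≥ 1 be an integer, r, s > −1 real numbers, and κ = (κ_1 ≥ ⋯ ≥ κ_m ≥ 0) a partition with at most m parts. Then (1/m!) ∫_{[0,1]^m} det( x_j^{κ_i + m − i} )_{i,j=1}^m · det( x_j^{m − i} )_{i,j=1}^m · ∏_{i=1}^m x_i^r (1−x_i)^s dx_1 ⋯ dx_m = ∏_{1 ≤ i < j ≤ m} (κ_i − κ_j + j − i) · ∏_{i=1}^m Γ(κ_i + r + m − i + 1) Γ(s + m − i + 1) / Γ(κ_i + r + s + 2m − i + 1), where Γ is the real Gamma function. -/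
open MeasureTheory

lemma kadell_andreief (m : ℕ) (μ : Measure ℝ) [SigmaFinite μ] (f g : Fin m → ℝ → ℝ) (w : ℝ → ℝ)
    (hint : ∀ i j, Integrable (fun x => f i x * g j x * w x) μ) :
    ∫ x : Fin m → ℝ, (Matrix.of fun i j : Fin m => f i (x j)).det *
        (Matrix.of fun i j : Fin m => g i (x j)).det * ∏ i, w (x i) ∂(Measure.pi fun _ => μ)
      = (Nat.factorial m : ℝ) *
        (Matrix.of fun i j : Fin m => ∫ x, f i x * g j x * w x ∂μ).det := by
  have h1 : ∀ x : Fin m → ℝ, (Matrix.of fun i j : Fin m => f i (x j)).det *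
        (Matrix.of fun i j : Fin m => g i (x j)).det * ∏ i, w (x i)
      = ∑ τ : Equiv.Perm (Fin m), ∑ σ : Equiv.Perm (Fin m),
        ((Equiv.Perm.sign τ : ℤ) : ℝ) * (((Equiv.Perm.sign σ : ℤ) : ℝ) *
          ∏ j, (f (σ j) (x j) * g (τ j) (x j) * w (x j))) := by
    intro x
    rw [Matrix.det_apply', Matrix.det_apply', Finset.sum_mul_sum, Finset.sum_mul]
    simp_rw [Finset.sum_mul]
    rw [Finset.sum_comm]
    refine Finset.sum_congr rfl fun τ _ => Finset.sum_congr rfl fun σ _ => ?_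
    simp only [Matrix.of_apply, Finset.prod_mul_distrib]
    ring
  have hI : ∀ σ τ : Equiv.Perm (Fin m), Integrable (fun x : Fin m → ℝ =>
      ∏ j, (f (σ j) (x j) * g (τ j) (x j) * w (x j))) (Measure.pi fun _ => μ) := by
    intro σ τ
    exact Integrable.fintype_prod (f := fun j y => f (σ j) y * g (τ j) y * w y)
      fun j => hint _ _
  simp_rw [h1]
  rw [integral_finsetSum _ fun τ _ => integrable_finsetSum _ fun σ _ =>
    ((hI σ τ).const_mul _).const_mul _]
  have h2 : ∀ τ : Equiv.Perm (Fin m),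
      ∫ x : Fin m → ℝ, ∑ σ : Equiv.Perm (Fin m),
        ((Equiv.Perm.sign τ : ℤ) : ℝ) * (((Equiv.Perm.sign σ : ℤ) : ℝ) *
          ∏ j, (f (σ j) (x j) * g (τ j) (x j) * w (x j))) ∂(Measure.pi fun _ => μ)
      = (Matrix.of fun i j : Fin m => ∫ x, f i x * g j x * w x ∂μ).det := by
    intro τ
    rw [integral_finsetSum _ fun σ _ => ((hI σ τ).const_mul _).const_mul _]
    simp_rw [integral_const_mul]
    rw [← Finset.mul_sum]
    have h3 : ∀ σ : Equiv.Perm (Fin m), ∫ x : Fin m → ℝ,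
        ∏ j, (f (σ j) (x j) * g (τ j) (x j) * w (x j)) ∂(Measure.pi fun _ => μ)
        = ∏ j, ((Matrix.of fun i j : Fin m => ∫ x, f i x * g j x * w x ∂μ).submatrix id τ)
            (σ j) j := by
      intro σ
      exact integral_fintype_prod_eq_prod (fun j y => f (σ j) y * g (τ j) y * w y)
    simp_rw [h3]
    rw [← Matrix.det_apply', Matrix.det_permute', ← mul_assoc]
    have : ((Equiv.Perm.sign τ : ℤ) : ℝ) * ((Equiv.Perm.sign τ : ℤ) : ℝ) = 1 := by
      rw [← Int.cast_mul, ← Units.val_mul, Int.units_mul_self]; simp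
    rw [this, one_mul]
  simp_rw [h2]
  simp [Fintype.card_perm]

lemma kadell_beta (r s : ℝ) (hr : -1 < r) (hs : -1 < s) (n k : ℕ) :
    Integrable (fun x : ℝ => x ^ n * (1 - x) ^ k * (x ^ r * (1 - x) ^ s))
        (volume.restrict (Set.Ioc (0:ℝ) 1)) ∧
      ∫ x : ℝ, x ^ n * (1 - x) ^ k * (x ^ r * (1 - x) ^ s) ∂(volume.restrict (Set.Ioc (0:ℝ) 1))
        = Real.Gamma (n + r + 1) * Real.Gamma (k + s + 1) /
          Real.Gamma ((n + r + 1) + (k + s + 1)) := by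
  have hn : (0:ℝ) ≤ n := Nat.cast_nonneg n
  have hk : (0:ℝ) ≤ k := Nat.cast_nonneg k
  have hu : (0:ℝ) < n + r + 1 := by linarith
  have hv : (0:ℝ) < k + s + 1 := by linarith
  have hc := Complex.betaIntegral_convergent (u := ((n + r + 1 : ℝ) : ℂ))
    (v := ((k + s + 1 : ℝ) : ℂ)) (by rwa [Complex.ofReal_re]) (by rwa [Complex.ofReal_re])
  rw [intervalIntegrable_iff_integrableOn_Ioc_of_le zero_le_one] at hc
  have hae : (fun x : ℝ => RCLike.re ((x : ℂ) ^ (((n + r + 1 : ℝ) : ℂ) - 1) *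
      (1 - (x : ℂ)) ^ (((k + s + 1 : ℝ) : ℂ) - 1))) =ᵐ[volume.restrict (Set.Ioc (0:ℝ) 1)]
      (fun x : ℝ => x ^ n * (1 - x) ^ k * (x ^ r * (1 - x) ^ s)) := by
    rw [← Measure.restrict_congr_set (Ioo_ae_eq_Ioc (μ := volume) (a := (0:ℝ)) (b := 1))]
    filter_upwards [self_mem_ae_restrict measurableSet_Ioo] with x hx
    have h1 : 0 < 1 - x := by linarith [hx.2]
    have e1 : (x : ℂ) ^ (((n + r + 1 : ℝ) : ℂ) - 1) = ((x ^ (n + r) : ℝ) : ℂ) := by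
      rw [Complex.ofReal_cpow hx.1.le]; congr 1; push_cast; ring
    have e2 : (1 - (x : ℂ)) ^ (((k + s + 1 : ℝ) : ℂ) - 1) = (((1 - x) ^ (k + s) : ℝ) : ℂ) := by
      rw [Complex.ofReal_cpow h1.le]; push_cast; congr 1; ring
    rw [e1, e2, ← Complex.ofReal_mul, Real.rpow_add hx.1, Real.rpow_add h1, Real.rpow_natCast,
      Real.rpow_natCast]
    simp only [RCLike.re_eq_complex_re, Complex.ofReal_re]
    ring
  refine ⟨Integrable.congr hc.re hae, ?_⟩
  rw [← integral_congr_ae hae, integral_re hc]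
  have := ProbabilityTheory.beta_eq_betaIntegralReal (n + r + 1) (k + s + 1) hu hv
  rw [ProbabilityTheory.beta, Complex.betaIntegral,
    intervalIntegral.integral_of_le zero_le_one] at this
  rw [this]
  rfl

lemma kadell_gamma (a : ℝ) (ha : 0 < a) (n : ℕ) :
    Real.Gamma (a + n) = (∏ k ∈ Finset.range n, (a + k)) * Real.Gamma a := by
  induction n with
  | zero => simp
  | succ n ih =>
    have : a + (n : ℝ) ≠ 0 := by positivity
    rw [Finset.prod_range_succ, Nat.cast_succ, ← add_assoc, Real.Gamma_add_one this, ih]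
    ring

lemma kadell_projdet (m : ℕ) (x : Fin m → ℝ) :
    (Matrix.of fun i j : Fin m => x j ^ (m - 1 - i.val)).det
      = ∏ i : Fin m, ∏ j ∈ Finset.Ioi i, (x i - x j) := by
  have h := Matrix.det_projVandermonde (fun _ : Fin m => (1:ℝ)) x
  simp only [one_mul] at h
  rw [← h, ← Matrix.det_transpose]
  congr 1
  ext i j
  simp only [Matrix.transpose_apply, Matrix.of_apply, Matrix.projVandermonde_apply, one_pow,
    one_mul, Fin.val_rev]
  congr 1
  omega

lemma kadell_polydet (m : ℕ) (l c : Fin m → ℝ) :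
    (Matrix.of fun i j : Fin m => ∏ k ∈ Finset.range j.val, (l i + c j + k)).det
      = ∏ i : Fin m, ∏ j ∈ Finset.Ioi i, (l j - l i) := by
  rw [← Matrix.det_vandermonde]
  rw [Matrix.det_eval_matrixOfPolynomials_eq_det_vandermonde l
    (fun j => ∏ k ∈ Finset.range j.val, (Polynomial.X + Polynomial.C (c j + k)))]
  · congr 1
    ext i j
    simp [Polynomial.eval_prod, add_assoc]
  · intro j
    rw [Polynomial.natDegree_prod_of_monic _ _ fun k _ => Polynomial.monic_X_add_C _]
    simp_rw [Polynomial.natDegree_X_add_C]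
    simp
  · intro j
    exact Polynomial.monic_prod_of_monic _ _ fun k _ => Polynomial.monic_X_add_C _

lemma kadell_sign (m : ℕ) (y : Fin m → ℝ) :
    ∏ i : Fin m, ∏ j ∈ Finset.Ioi i, (y i - y j)
      = (∏ i : Fin m, ∏ _j ∈ Finset.Ioi i, (-1 : ℝ)) *
        ∏ i : Fin m, ∏ j ∈ Finset.Ioi i, (y j - y i) := by
  simp_rw [← Finset.prod_mul_distrib]
  refine Finset.prod_congr rfl fun i _ => Finset.prod_congr rfl fun j _ => ?_
  ring

/-- Kadell's integral: for `m ≥ 1`, `r, s > -1` and a partition `κ` with at most `m` parts,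
`(1/m!) ∫_{[0,1]^m} det(x_j^{κ_i + m - i}) · det(x_j^{m - i}) · ∏_i x_i^r (1 - x_i)^s dx
  = ∏_{i<j} (κ_i - κ_j + j - i) · ∏_i Γ(κ_i + r + m - i + 1) Γ(s + m - i + 1) / Γ(κ_i + r + s + 2m - i + 1)`.
Indices `i, j : Fin m` correspond to `i + 1, j + 1 ∈ {1, …, m}`, so `m - i` reads
`m - 1 - i.val` and `2m - i` reads `(m - 1 - i.val) + m`. -/
theorem kadell_integral (m : ℕ) (hm : 1 ≤ m)
    (r s : ℝ) (hr : -1 < r) (hs : -1 < s)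
    (κ : Fin m → ℕ) (hκ : Antitone κ) :
    (1 / (Nat.factorial m : ℝ)) *
      ∫ x : Fin m → ℝ,
          (Matrix.of fun i j : Fin m => x j ^ (κ i + (m - 1 - i.val))).det *
            (Matrix.of fun i j : Fin m => x j ^ (m - 1 - i.val)).det *
            ∏ i : Fin m, x i ^ r * (1 - x i) ^ s
          ∂(Measure.pi fun _ : Fin m => volume.restrict (Set.Ioc (0:ℝ) 1))
      = (∏ i : Fin m, ∏ j ∈ Finset.Ioi i,
            ((κ i : ℝ) - (κ j : ℝ) + (j.val : ℝ) - (i.val : ℝ))) *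
        ∏ i : Fin m,
          Real.Gamma ((κ i : ℝ) + r + ((m - 1 - i.val : ℕ) : ℝ) + 1) *
            Real.Gamma (s + ((m - 1 - i.val : ℕ) : ℝ) + 1) /
            Real.Gamma ((κ i : ℝ) + r + s + ((m - 1 - i.val : ℕ) : ℝ) + (m : ℝ) + 1) := by
  set l : Fin m → ℕ := fun i => κ i + (m - 1 - i.val) with hl
  set c : ℝ := ∏ i : Fin m, ∏ _j ∈ Finset.Ioi i, (-1 : ℝ) with hc
  have hdet : ∀ x : Fin m → ℝ, (Matrix.of fun i j : Fin m => x j ^ (m - 1 - i.val)).det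
      = c * (Matrix.of fun i j : Fin m => (1 - x j) ^ (m - 1 - i.val)).det := by
    intro x
    rw [kadell_projdet, kadell_projdet m (fun j => 1 - x j), kadell_sign]
    congr 1
    refine Finset.prod_congr rfl fun i _ => Finset.prod_congr rfl fun j _ => ?_
    ring
  have hA := kadell_andreief m (volume.restrict (Set.Ioc (0:ℝ) 1)) (fun i x => x ^ l i)
    (fun j x => (1 - x) ^ (m - 1 - j.val)) (fun x => x ^ r * (1 - x) ^ s)
    (fun i j => (kadell_beta r s hr hs _ _).1)
  have hLHS : ∀ x : Fin m → ℝ,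
      (Matrix.of fun i j : Fin m => x j ^ (κ i + (m - 1 - i.val))).det *
            (Matrix.of fun i j : Fin m => x j ^ (m - 1 - i.val)).det *
            ∏ i : Fin m, x i ^ r * (1 - x i) ^ s
      = c * ((Matrix.of fun i j : Fin m => x j ^ l i).det *
        (Matrix.of fun i j : Fin m => (1 - x j) ^ (m - 1 - i.val)).det *
          ∏ i : Fin m, (x i ^ r * (1 - x i) ^ s)) := by
    intro x
    rw [hdet]
    ring
  simp_rw [hLHS]
  rw [integral_const_mul, hA]
  have hfac : (Nat.factorial m : ℝ) ≠ 0 := by positivity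
  have hM : (Matrix.of fun i j : Fin m => ∫ x, x ^ l i * (1 - x) ^ (m - 1 - j.val) *
      (x ^ r * (1 - x) ^ s) ∂(volume.restrict (Set.Ioc (0:ℝ) 1)))
      = Matrix.of fun i j : Fin m =>
        (Real.Gamma ((κ i : ℝ) + r + ((m - 1 - i.val : ℕ) : ℝ) + 1) /
          Real.Gamma ((κ i : ℝ) + r + s + ((m - 1 - i.val : ℕ) : ℝ) + (m : ℝ) + 1)) *
        (Matrix.of fun i j : Fin m => Real.Gamma (s + ((m - 1 - j.val : ℕ) : ℝ) + 1) *
          (Matrix.of fun i j : Fin m => ∏ k ∈ Finset.range j.val,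
            ((l i : ℝ) + (r + s + m + 1 - j.val) + k)) i j) i j := by
    ext i j
    simp only [Matrix.of_apply]
    rw [(kadell_beta r s hr hs _ _).2]
    have hj : ((m - 1 - j.val : ℕ) : ℝ) = m - 1 - j.val := by
      rw [Nat.cast_sub (by omega), Nat.cast_sub hm]; simp
    have hjm : (j.val : ℝ) + 1 ≤ m := by exact_mod_cast j.isLt
    have hl0 : (0:ℝ) ≤ l i := Nat.cast_nonneg _
    have ha : 0 < (l i : ℝ) + (r + s + m + 1 - j.val) := by linarith
    have hli : (l i : ℝ) = κ i + ((m - 1 - i.val : ℕ) : ℝ) := by simp [hl]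
    have hG := kadell_gamma _ ha j.val
    have e1 : (κ i : ℝ) + r + s + ((m - 1 - i.val : ℕ) : ℝ) + (m : ℝ) + 1
        = (l i : ℝ) + (r + s + m + 1 - j.val) + j.val := by rw [hli]; ring
    have e2 : (l i : ℝ) + r + 1 + (((m - 1 - j.val : ℕ) : ℝ) + s + 1)
        = (l i : ℝ) + (r + s + m + 1 - j.val) := by rw [hj]; ring
    have e3 : (κ i : ℝ) + r + ((m - 1 - i.val : ℕ) : ℝ) + 1 = l i + r + 1 := by rw [hli]; ring
    rw [e1, e2, e3, hG, add_comm s]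
    have hGa := (Real.Gamma_pos_of_pos ha).ne'
    have hP : ∏ k ∈ Finset.range j.val, ((l i : ℝ) + (r + s + m + 1 - j.val) + k) ≠ 0 :=
      Finset.prod_ne_zero_iff.mpr fun k _ => by positivity
    field_simp
  rw [hM, Matrix.det_mul_column, Matrix.det_mul_row,
    kadell_polydet m (fun i => (l i : ℝ)) (fun j => r + s + m + 1 - j.val)]
  have hV : (∏ i : Fin m, ∏ j ∈ Finset.Ioi i,
      ((κ i : ℝ) - (κ j : ℝ) + (j.val : ℝ) - (i.val : ℝ)))
      = c * ∏ i : Fin m, ∏ j ∈ Finset.Ioi i, ((l j : ℝ) - l i) := by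
    rw [← kadell_sign m (fun i => (l i : ℝ))]
    refine Finset.prod_congr rfl fun i _ => Finset.prod_congr rfl fun j _ => ?_
    have hj : ∀ j : Fin m, (l j : ℝ) = κ j + (m - 1 - j.val) := by
      intro j
      simp only [hl]
      rw [Nat.cast_add, Nat.cast_sub (by omega), Nat.cast_sub hm]; simp
    rw [hj, hj]; ring
  rw [hV]
  simp_rw [Finset.prod_div_distrib, Finset.prod_mul_distrib]
  field_simp
end

section
/- Let m ≥ 1 and r ≥ s ≥ 0 be integers and t, d > 0 real numbers. For a partition τ = (τ_1 ≥ ⋯ ≥ τ_m ≥ 0) define K_τ = ∑_{i=1}^m τ_i (τ_i + r + s + 1 + 2(m−i)), Q_τ = ∏_{1≤i<j≤m} (τ_i − τ_j + j − i)(τ_i + τ_j + 2m − i − j + r + s + 1) · ∏_{i=1}^m Γ(τ_i + m − i + r + 1) 2^{−(m−i)} / ( Γ(τ_i + m − i + 1) Γ(m − i + r + 1) Γ(m − i + 1) ), and N_τ = ∏_{i=1}^m (2(τ_i + m − i) + r + s + 1) Γ(τ_i + m − i + 1) Γ(τ_i + m − i + 1 + r + s) / ( Γ(r + τ_i + m −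 i + 1) Γ(s + τ_i + m − i + 1) ). Then the family τ ↦ exp(−K_τ t/d) · Q_τ^2 · N_τ, indexed by all partitions τ with at most m parts, is summable. -/
/-- Growth bounded by a power of `∏ (f i + 1)`. -/
def PolyBdd {m : ℕ} (g : (Fin m → ℕ) → ℝ) : Prop :=
  ∃ (C : ℝ) (k : ℕ), ∀ f : Fin m → ℕ, |g f| ≤ C * (∏ i, ((f i : ℝ) + 1)) ^ k

namespace PolyBdd

variable {m : ℕ}

lemma one_le_aux {ι : Type*} (S : Finset ι) (g : ι → ℝ) (h : ∀ i, 1 ≤ g i) :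
    1 ≤ ∏ i ∈ S, g i := by
  classical
  induction S using Finset.induction_on with
  | empty => simp
  | insert a S ha ih =>
    rw [Finset.prod_insert ha]
    exact one_le_mul_of_one_le_of_one_le (h a) ih

lemma one_le_P (f : Fin m → ℕ) : (1 : ℝ) ≤ ∏ i, ((f i : ℝ) + 1) :=
  one_le_aux _ _ fun i => by linarith [Nat.cast_nonneg (α := ℝ) (f i)]

lemma le_P (f : Fin m → ℕ) (i : Fin m) : (f i : ℝ) + 1 ≤ ∏ i, ((f i : ℝ) + 1) := by
  rw [← Finset.mul_prod_erase _ _ (Finset.mem_univ i)]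
  refine le_mul_of_one_le_right (by positivity) ?_
  exact one_le_aux _ _ fun i => by linarith [Nat.cast_nonneg (α := ℝ) (f i)]

lemma const (c : ℝ) : PolyBdd (fun _ : Fin m → ℕ => c) :=
  ⟨|c|, 0, fun f => by simp⟩

lemma mono {g h : (Fin m → ℕ) → ℝ} (hh : PolyBdd h) (H : ∀ f, |g f| ≤ |h f|) : PolyBdd g := by
  obtain ⟨C, k, hC⟩ := hh
  exact ⟨C, k, fun f => (H f).trans (hC f)⟩

lemma coord (i : Fin m) : PolyBdd (fun f : Fin m → ℕ => (f i : ℝ)) :=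
  ⟨1, 1, fun f => by
    rw [abs_of_nonneg (by positivity), one_mul, pow_one]
    linarith [le_P f i]⟩

lemma mul {g h : (Fin m → ℕ) → ℝ} (hg : PolyBdd g) (hh : PolyBdd h) :
    PolyBdd (fun f => g f * h f) := by
  obtain ⟨C, k, hC⟩ := hg
  obtain ⟨D, l, hD⟩ := hh
  refine ⟨C * D, k + l, fun f => ?_⟩
  rw [abs_mul]
  calc |g f| * |h f| ≤ (C * (∏ i, ((f i : ℝ) + 1)) ^ k) * (D * (∏ i, ((f i : ℝ) + 1)) ^ l) :=
        mul_le_mul (hC f) (hD f) (abs_nonneg _) ((abs_nonneg _).trans (hC f))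
    _ = _ := by ring

lemma add {g h : (Fin m → ℕ) → ℝ} (hg : PolyBdd g) (hh : PolyBdd h) :
    PolyBdd (fun f => g f + h f) := by
  obtain ⟨C, k, hC⟩ := hg
  obtain ⟨D, l, hD⟩ := hh
  have key : ∀ (f : Fin m → ℕ) (x E : ℝ) (a b : ℕ),
      |x| ≤ E * (∏ i, ((f i : ℝ) + 1)) ^ a → a ≤ b →
      |x| ≤ |E| * (∏ i, ((f i : ℝ) + 1)) ^ b := by
    intro f x E a b hx hab
    refine hx.trans (mul_le_mul (le_abs_self E) (pow_le_pow_right₀ (one_le_P f) hab)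
      (pow_nonneg (zero_le_one.trans (one_le_P f)) _) (abs_nonneg _))
  refine ⟨|C| + |D|, k + l, fun f => ?_⟩
  have h1 := key f _ C k (k + l) (hC f) (by omega)
  have h2 := key f _ D l (k + l) (hD f) (by omega)
  rw [add_mul]
  exact (abs_add_le _ _).trans (add_le_add h1 h2)

lemma sub {g h : (Fin m → ℕ) → ℝ} (hg : PolyBdd g) (hh : PolyBdd h) :
    PolyBdd (fun f => g f - h f) := by
  have : PolyBdd (fun f => -h f) := hh.mono fun f => by simp
  simpa [sub_eq_add_neg] using hg.add this

lemma pow {g : (Fin m → ℕ) → ℝ} (hg : PolyBdd g) (n : ℕ) : PolyBdd (fun f => g f ^ n) := by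
  induction n with
  | zero => simpa using const 1
  | succ n ih => simpa [pow_succ] using ih.mul hg

lemma prod {ι : Type*} (S : Finset ι) {g : ι → (Fin m → ℕ) → ℝ} (hg : ∀ i, PolyBdd (g i)) :
    PolyBdd (fun f => ∏ i ∈ S, g i f) := by
  classical
  induction S using Finset.induction_on with
  | empty => simpa using const 1
  | insert a S ha ih => simpa [Finset.prod_insert ha] using (hg a).mul ih

lemma coord_add (i : Fin m) (a : ℕ) : PolyBdd (fun f : Fin m → ℕ => ((f i + a : ℕ) : ℝ)) := by
  simpa using (coord i).add (const (a : ℝ))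

end PolyBdd

lemma gamma_ratio_le (n r : ℕ) :
    Real.Gamma ((n + r + 1 : ℕ)) ≤ ((n + r : ℕ) : ℝ) ^ r * Real.Gamma ((n + 1 : ℕ)) := by
  push_cast
  have h1 := Real.Gamma_nat_eq_factorial (n + r)
  have h2 := Real.Gamma_nat_eq_factorial n
  push_cast at h1
  rw [h1, h2]
  have h3 := Nat.factorial_mul_ascFactorial n r
  have h4 := Nat.ascFactorial_le_pow_add n r
  have : (n + r).factorial ≤ (n + r) ^ r * n.factorial := by
    rw [← h3, mul_comm]
    exact Nat.mul_le_mul_right _ h4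
  exact_mod_cast this

lemma gamma_mono_nat (n s : ℕ) :
    Real.Gamma ((n + 1 : ℕ)) ≤ Real.Gamma ((n + s + 1 : ℕ)) := by
  have h1 := Real.Gamma_nat_eq_factorial (n + s)
  have h2 := Real.Gamma_nat_eq_factorial n
  push_cast at h1 ⊢
  rw [h1, h2]
  exact_mod_cast Nat.factorial_le (Nat.le_add_right n s)

lemma gamma_nat_pos (n : ℕ) : 0 < Real.Gamma ((n + 1 : ℕ)) :=
  Real.Gamma_pos_of_pos (by positivity)

lemma summable_one (c : ℝ) (hc : 0 < c) (k : ℕ) :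
    Summable (fun n : ℕ => Real.exp (-c * n) * ((n : ℝ) + 1) ^ k) := by
  have h := (summable_nat_add_iff 1).2 (Real.summable_pow_mul_exp_neg_nat_mul k hc)
  refine (h.mul_left (Real.exp c)).congr fun n => ?_
  push_cast
  rw [show -c * (n : ℝ) = c + -c * (n + 1) by ring, Real.exp_add]
  ring

lemma summable_pi_prod (m : ℕ) (u : ℕ → ℝ) (hu : Summable u) (h0 : ∀ n, 0 ≤ u n) :
    Summable (fun f : Fin m → ℕ => ∏ i, u (f i)) := by
  refine summable_of_sum_le (c := (∑' n, u n) ^ m)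
    (fun f => Finset.prod_nonneg fun i _ => h0 _) fun S => ?_
  classical
  set T : Finset ℕ := S.biUnion fun f => Finset.univ.image f with hT
  have hsub : S ⊆ Fintype.piFinset fun _ : Fin m => T := by
    intro f hf
    rw [Fintype.mem_piFinset]
    intro i
    exact Finset.mem_biUnion.2 ⟨f, hf, Finset.mem_image_of_mem _ (Finset.mem_univ i)⟩
  calc ∑ f ∈ S, ∏ i, u (f i) ≤ ∑ f ∈ Fintype.piFinset fun _ : Fin m => T, ∏ i, u (f i) :=
        Finset.sum_le_sum_of_subset_of_nonneg hsub
          fun f _ _ => Finset.prod_nonneg fun i _ => h0 _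
    _ = ∏ _i : Fin m, ∑ n ∈ T, u n := (Finset.prod_univ_sum (fun _ => T) (fun _ n => u n)).symm
    _ = (∑ n ∈ T, u n) ^ m := by simp
    _ ≤ _ := pow_le_pow_left₀ (Finset.sum_nonneg fun n _ => h0 n)
        (hu.sum_le_tsum T fun n _ => h0 n) m

lemma summable_exp_mul {m : ℕ} (c : ℝ) (hc : 0 < c) (K : (Fin m → ℕ) → ℕ)
    (hK : ∀ f, ∑ i, f i ≤ K f) (g : (Fin m → ℕ) → ℝ) (hg : PolyBdd g) :
    Summable (fun f => Real.exp (-(K f : ℝ) * c) * g f) := by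
  obtain ⟨C, k, hC⟩ := hg
  refine Summable.of_norm_bounded
    ((summable_pi_prod m _ (summable_one c hc k) fun n => by positivity).mul_left C) fun f => ?_
  rw [Real.norm_eq_abs, abs_mul, Real.abs_exp, Finset.prod_mul_distrib, Finset.prod_pow,
    ← Real.exp_sum, ← Finset.mul_sum]
  have h1 : Real.exp (-(K f : ℝ) * c) ≤ Real.exp (-c * ∑ i, (f i : ℝ)) := by
    rw [Real.exp_le_exp]
    have : (∑ i, (f i : ℝ)) ≤ K f := by exact_mod_cast hK f
    nlinarith
  calc _ ≤ Real.exp (-c * ∑ i, (f i : ℝ)) * (C * (∏ i, ((f i : ℝ) + 1)) ^ k) :=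
        mul_le_mul h1 (hC f) (abs_nonneg _) (Real.exp_pos _).le
    _ = _ := by ring

/-- Absolute convergence of the bilinear series defining the semi-group density of the
eigenvalues of the Hermitian matrix Jacobi process: for integers `m ≥ 1`, `r ≥ s ≥ 0` and
reals `t, d > 0`, the family `τ ↦ exp(-K_τ t/d) · Q_τ² · N_τ`, indexed by the partitions `τ`
with at most `m` parts, is summable.  Here, with indices `i, j : Fin m` standing for
`i + 1, j + 1 ∈ {1, …, m}` (so `m - i` reads `m - 1 - i.val`):
* `K_τ = ∑_i τ_i (τ_i + r + s + 1 + 2(m - i))`,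
* `Q_τ = ∏_{i<j} (τ_i - τ_j + j - i)(τ_i + τ_j + 2m - i - j + r + s + 1)
    · ∏_i Γ(τ_i + m - i + r + 1) 2^{-(m-i)} / (Γ(τ_i + m - i + 1) Γ(m - i + r + 1) Γ(m - i + 1))`,
* `N_τ = ∏_i (2(τ_i + m - i) + r + s + 1) Γ(τ_i + m - i + 1) Γ(τ_i + m - i + 1 + r + s)
    / (Γ(r + τ_i + m - i + 1) Γ(s + τ_i + m - i + 1))`. -/
theorem semigroup_density_abs_convergence (m r s : ℕ) (hm : 1 ≤ m) (hsr : s ≤ r)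
    (t d : ℝ) (ht : 0 < t) (hd : 0 < d) :
    Summable (fun τ : {f : Fin m → ℕ // Antitone f} =>
      Real.exp (-((∑ i : Fin m,
            (τ.1 i * (τ.1 i + r + s + 1 + 2 * (m - 1 - i.val)) : ℕ) : ℕ) : ℝ) * t / d) *
        ((∏ i : Fin m, ∏ j ∈ Finset.Ioi i,
            (((τ.1 i : ℝ) - (τ.1 j : ℝ) + (j.val : ℝ) - (i.val : ℝ)) *
              ((τ.1 i + τ.1 j + (m - 1 - i.val) + (m - 1 - j.val) + r + s + 1 : ℕ) : ℝ))) *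
          ∏ i : Fin m,
            Real.Gamma ((τ.1 i + (m - 1 - i.val) + r + 1 : ℕ)) *
              ((2 : ℝ) ^ (m - 1 - i.val))⁻¹ /
              (Real.Gamma ((τ.1 i + (m - 1 - i.val) + 1 : ℕ)) *
                Real.Gamma (((m - 1 - i.val) + r + 1 : ℕ)) *
                Real.Gamma (((m - 1 - i.val) + 1 : ℕ)))) ^ 2 *
        ∏ i : Fin m,
          ((2 * (τ.1 i + (m - 1 - i.val)) + r + s + 1 : ℕ) : ℝ) *
            Real.Gamma ((τ.1 i + (m - 1 - i.val) + 1 : ℕ)) *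
            Real.Gamma ((τ.1 i + (m - 1 - i.val) + 1 + r + s : ℕ)) /
            (Real.Gamma ((r + τ.1 i + (m - 1 - i.val) + 1 : ℕ)) *
              Real.Gamma ((s + τ.1 i + (m - 1 - i.val) + 1 : ℕ)))) := by
  have key := summable_exp_mul (m := m) (t / d) (div_pos ht hd)
    (fun f => ∑ i : Fin m, (f i * (f i + r + s + 1 + 2 * (m - 1 - i.val))))
    (fun f => Finset.sum_le_sum fun i _ => Nat.le_mul_of_pos_right _ (by omega))
    (fun f => ((∏ i : Fin m, ∏ j ∈ Finset.Ioi i,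
            (((f i : ℝ) - (f j : ℝ) + (j.val : ℝ) - (i.val : ℝ)) *
              ((f i + f j + (m - 1 - i.val) + (m - 1 - j.val) + r + s + 1 : ℕ) : ℝ))) *
          ∏ i : Fin m,
            Real.Gamma ((f i + (m - 1 - i.val) + r + 1 : ℕ)) *
              ((2 : ℝ) ^ (m - 1 - i.val))⁻¹ /
              (Real.Gamma ((f i + (m - 1 - i.val) + 1 : ℕ)) *
                Real.Gamma (((m - 1 - i.val) + r + 1 : ℕ)) *
                Real.Gamma (((m - 1 - i.val) + 1 : ℕ)))) ^ 2 *
        ∏ i : Fin m,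
          ((2 * (f i + (m - 1 - i.val)) + r + s + 1 : ℕ) : ℝ) *
            Real.Gamma ((f i + (m - 1 - i.val) + 1 : ℕ)) *
            Real.Gamma ((f i + (m - 1 - i.val) + 1 + r + s : ℕ)) /
            (Real.Gamma ((r + f i + (m - 1 - i.val) + 1 : ℕ)) *
              Real.Gamma ((s + f i + (m - 1 - i.val) + 1 : ℕ)))) ?_
  · refine (key.comp_injective (i := fun τ : {f : Fin m → ℕ // Antitone f} => τ.1)
      Subtype.val_injective).congr fun τ => ?_
    simp only [Function.comp]
    rw [← mul_div_assoc, ← mul_assoc]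
  refine PolyBdd.mul (PolyBdd.pow (PolyBdd.mul (PolyBdd.prod _ fun i => PolyBdd.prod _ fun j =>
    PolyBdd.mul ?_ ?_) (PolyBdd.prod _ fun i => ?_)) 2) (PolyBdd.prod _ fun i => ?_)
  · exact (((PolyBdd.coord i).sub (PolyBdd.coord j)).add (PolyBdd.const _)).sub (PolyBdd.const _)
  · have := (PolyBdd.coord i).add (PolyBdd.coord_add j
      ((m - 1 - i.val) + (m - 1 - j.val) + r + s + 1))
    refine this.mono fun f => le_of_eq ?_
    congr 1
    rw [← Nat.cast_add]
    congr 1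
    omega
  · generalize m - 1 - i.val = b
    have h := ((PolyBdd.coord_add i (b + r)).pow r).mul (PolyBdd.const (((2 : ℝ) ^ b)⁻¹ /
      (Real.Gamma ((b + r + 1 : ℕ)) * Real.Gamma ((b + 1 : ℕ)))))
    refine h.mono fun f => ?_
    have p1 := gamma_nat_pos (f i + b + r)
    have p2 := gamma_nat_pos (f i + b)
    have p3 := gamma_nat_pos (b + r)
    have p4 := gamma_nat_pos b
    have hr := gamma_ratio_le (f i + b) r
    rw [← add_assoc (f i) b r]
    generalize Real.Gamma ((f i + b + r + 1 : ℕ)) = G1 at *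
    generalize Real.Gamma ((f i + b + 1 : ℕ)) = G2 at *
    generalize Real.Gamma ((b + r + 1 : ℕ)) = G3 at *
    generalize Real.Gamma ((b + 1 : ℕ)) = G4 at *
    rw [abs_of_nonneg (by positivity), abs_of_nonneg (by positivity)]
    have e : G1 * ((2 : ℝ) ^ b)⁻¹ / (G2 * G3 * G4) =
        (G1 / G2) * (((2 : ℝ) ^ b)⁻¹ / (G3 * G4)) := by field_simp
    rw [e]
    exact mul_le_mul_of_nonneg_right ((div_le_iff₀ p2).2 hr) (by positivity)
  · generalize m - 1 - i.val = b
    have h := ((PolyBdd.const 2).mul (PolyBdd.coord_add i (b + r + s + 1))).mul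
      ((PolyBdd.coord_add i (b + r + s)).pow s)
    refine h.mono fun f => ?_
    have p1 := gamma_nat_pos (f i + b)
    have p2 := gamma_nat_pos (f i + b + r + s)
    have p3 := gamma_nat_pos (f i + b + r)
    have p4 := gamma_nat_pos (f i + b + s)
    have h1 := gamma_ratio_le (f i + b + r) s
    have h2 := gamma_mono_nat (f i + b) s
    rw [show f i + b + 1 + r + s = f i + b + r + s + 1 by ring,
      show r + f i + b + 1 = f i + b + r + 1 by ring,
      show s + f i + b + 1 = f i + b + s + 1 by ring,
      show f i + (b + r + s) = f i + b + r + s by ring]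
    have h3 : ((2 * (f i + b) + r + s + 1 : ℕ) : ℝ) ≤ 2 * ((f i + (b + r + s + 1) : ℕ) : ℝ) := by
      exact_mod_cast (by omega :
        2 * (f i + b) + r + s + 1 ≤ 2 * (f i + (b + r + s + 1)))
    have h0 : (0 : ℝ) ≤ ((2 * (f i + b) + r + s + 1 : ℕ) : ℝ) := Nat.cast_nonneg _
    generalize Real.Gamma ((f i + b + r + s + 1 : ℕ)) = G1 at *
    generalize Real.Gamma ((f i + b + r + 1 : ℕ)) = G2 at *
    generalize Real.Gamma ((f i + b + s + 1 : ℕ)) = G3 at *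
    generalize Real.Gamma ((f i + b + 1 : ℕ)) = G4 at *
    generalize ((2 * (f i + b) + r + s + 1 : ℕ) : ℝ) = A at *
    rw [abs_of_nonneg (by positivity), abs_of_nonneg (by positivity)]
    have e : A * G4 * G1 / (G2 * G3) = A * (G1 / G2) * (G4 / G3) := by field_simp
    rw [e]
    have q1 : G4 / G3 ≤ 1 := (div_le_one p4).2 h2
    refine (mul_le_of_le_one_right (by positivity) q1).trans ?_
    exact mul_le_mul h3 ((div_le_iff₀ p3).2 h1) (by positivity) (by positivity)
end

section
/- Let a ≥ 1 and b ≥ 0 be integers. Then for every real number x, 1 + ∑_{c=1}^a ∑_{e=0}^b binom((a,1^b),(c,1^e)) · x^{c+e} = (1+x)^{a+b}. -/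
/-- The generalized binomial coefficient `binom(τ, μ)` for the hooks `τ = (a, 1^b)` and
`μ = (c, 1^e)` with `1 ≤ c ≤ a`, `0 ≤ e ≤ b`:
`binom(τ,μ) = C(a-1, a-c) · C(b, b-e) · [(a+e)(b+c) - (a-c)(b-e)] / (c+e)²`. -/
noncomputable def hookBinom (a b c e : ℕ) : ℝ :=
  (Nat.choose (a - 1) (a - c) : ℝ) * (Nat.choose b (b - e) : ℝ) *
    (((a : ℝ) + e) * ((b : ℝ) + c) - ((a : ℝ) - c) * ((b : ℝ) - e)) / ((c : ℝ) + e) ^ 2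

lemma hookBinom_succ (A b k e : ℕ) (hk : k ≤ A) (he : e ≤ b) :
    hookBinom (A + 1) b (k + 1) e
      = (Nat.choose A k : ℝ) * (Nat.choose b e : ℝ) * (A + b + 1) / ((k + e + 1 : ℕ) : ℝ) := by
  unfold hookBinom
  have h1 : A + 1 - (k + 1) = A - k := by omega
  rw [h1, Nat.add_sub_cancel, Nat.choose_symm hk, Nat.choose_symm he]
  have h : ((k : ℝ) + 1 + e) ≠ 0 := by positivity
  have h' : ((k : ℝ) + e + 1) ≠ 0 := by positivity
  push_cast
  field_simp
  ring

/-- Specialization at equal variables of the generalized binomial formula for Schur functions,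
for a hook `τ = (a, 1^b)` with `a ≥ 1`, `b ≥ 0`:
`1 + ∑_{c=1}^a ∑_{e=0}^b binom((a,1^b), (c,1^e)) x^{c+e} = (1+x)^{a+b}` for all real `x`
(the summand indexed by `(c, e)` corresponds to the hook `μ = (c, 1^e) ⊆ τ` of weight
`|μ| = c + e`, the term `1` to the empty partition). -/
theorem hook_binomial_formula (a b : ℕ) (ha : 1 ≤ a) (x : ℝ) :
    1 + ∑ c ∈ Finset.Icc 1 a, ∑ e ∈ Finset.range (b + 1),
        hookBinom a b c e * x ^ (c + e)
      = (1 + x) ^ (a + b) := by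
  obtain ⟨A, rfl⟩ : ∃ A, a = A + 1 := ⟨a - 1, by omega⟩
  have hsum : ∀ y : ℝ, ∑ c ∈ Finset.Icc 1 (A + 1), ∑ e ∈ Finset.range (b + 1),
        hookBinom (A + 1) b c e * y ^ (c + e)
      = ∑ k ∈ Finset.range (A + 1), ∑ e ∈ Finset.range (b + 1),
        (Nat.choose A k : ℝ) * (Nat.choose b e : ℝ) * (A + b + 1) / ((k + e + 1 : ℕ) : ℝ)
          * y ^ (k + e + 1) := by
    intro y
    rw [← Finset.Ico_add_one_right_eq_Icc, Finset.sum_Ico_eq_sum_range]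
    refine Finset.sum_congr (by simp) fun k hk => Finset.sum_congr rfl fun e he => ?_
    rw [Finset.mem_range] at hk he
    rw [add_comm 1 k, hookBinom_succ A b k e (by omega) (by omega),
      show k + 1 + e = k + e + 1 by omega]
  rw [hsum]
  set F : ℝ → ℝ := fun y => ∑ k ∈ Finset.range (A + 1), ∑ e ∈ Finset.range (b + 1),
        (Nat.choose A k : ℝ) * (Nat.choose b e : ℝ) * (A + b + 1) / ((k + e + 1 : ℕ) : ℝ)
          * y ^ (k + e + 1) with hF
  have hF' : ∀ y, HasDerivAt F (((A : ℝ) + b + 1) * (1 + y) ^ (A + b)) y := by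
    intro y
    have h : HasDerivAt F (∑ k ∈ Finset.range (A + 1), ∑ e ∈ Finset.range (b + 1),
        (Nat.choose A k : ℝ) * (Nat.choose b e : ℝ) * (A + b + 1) / ((k + e + 1 : ℕ) : ℝ)
          * (((k + e + 1 : ℕ) : ℝ) * y ^ (k + e))) y := by
      refine HasDerivAt.fun_sum fun k _ => HasDerivAt.fun_sum fun e _ => ?_
      exact (hasDerivAt_pow (k + e + 1) y).const_mul _
    convert h using 1
    rw [pow_add, add_comm 1 y, add_pow, add_pow, Finset.sum_mul_sum, Finset.mul_sum]
    refine Finset.sum_congr rfl fun k _ => ?_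
    rw [Finset.mul_sum]
    refine Finset.sum_congr rfl fun e _ => ?_
    have h' : ((k + e + 1 : ℕ) : ℝ) ≠ 0 := by positivity
    field_simp
    simp only [one_pow]
    ring
  have hG : ∀ y, HasDerivAt (fun y => 1 + F y - (1 + y) ^ (A + 1 + b)) 0 y := by
    intro y
    have h2 := (((hasDerivAt_id y).const_add 1).pow (A + 1 + b))
    have h3 := ((hF' y).const_add 1).sub h2
    refine h3.congr_deriv ?_
    rw [show A + 1 + b - 1 = A + b by omega]
    push_cast
    simp only [id]
    ring
  have hc := is_const_of_deriv_eq_zero (fun y => (hG y).differentiableAt)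
    (fun y => (hG y).deriv) x 0
  have h0 : F 0 = 0 := by simp [hF]
  simp only [h0] at hc
  have : 1 + F x - (1 + x) ^ (A + 1 + b) = 0 := by rw [hc]; simp
  change 1 + F x = _
  linarith
end

section
/- Let a ≥ 1, b ≥ 0, 1 ≤ c ≤ a, 0 ≤ e ≤ b be integers, and set τ = (a,1^b), μ = (c,1^e). Let p, d : ℕ → ℕ be sequences with m ≤ p(m) ≤ d(m) for all m and lim_{m→∞} p(m)/d(m) = θ ∈ (0,1). Then lim_{m→∞} (−1)^{c+e} · binom(τ,μ) · C_μ^τ(d(m)) / ∏_{i=1}^{e+1} (p(m) − i + 1)_{μ_i} = (−1/θ)^{c+e} · binom(τ,μ), where μ_1 = c and μ_2 = ⋯ = μ_{e+1} = 1, and (z)_n = z(z+1)⋯(z+n−1) denotes the rising factorial. -/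
open Filter

/-- For the hooks `τ = (a, 1^b)`, `μ = (c, 1^e)`, the polynomial
`C_μ^τ(X) = (X + (a(a-1) - b(b+1))/(a+b)) · ∏_{i=2}^c (X + a + i - 2) · ∏_{i=1}^e (X - b - i)`. -/
noncomputable def hookC (a b c e : ℕ) (X : ℝ) : ℝ :=
  (X + ((a : ℝ) * ((a : ℝ) - 1) - (b : ℝ) * ((b : ℝ) + 1)) / ((a : ℝ) + (b : ℝ))) *
    (∏ i ∈ Finset.Icc 2 c, (X + (a : ℝ) + (i : ℝ) - 2)) *
    ∏ i ∈ Finset.Icc 1 e, (X - (b : ℝ) - (i : ℝ))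

/-- The generalized Pochhammer symbol `∏_{i=1}^{e+1} (p - i + 1)_{μ_i}` for the hook
`μ = (c, 1^e)` (so `μ_1 = c` and `μ_2 = ⋯ = μ_{e+1} = 1`), where
`(z)_n = z(z+1)⋯(z+n-1)` is the rising factorial. -/
noncomputable def hookPoch (p c e : ℕ) : ℝ :=
  ∏ i ∈ Finset.Icc 1 (e + 1),
    Polynomial.eval ((p : ℝ) - (i : ℝ) + 1) (ascPochhammer ℝ (if i = 1 then c else 1))

theorem tendsto_shift_div (u : ℕ → ℝ) (hu : Tendsto u atTop atTop) (k : ℝ) :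
    Tendsto (fun m => (u m + k) / u m) atTop (nhds 1) := by
  have h1 : Tendsto (fun m => 1 + k / u m) atTop (nhds (1 + 0)) :=
    tendsto_const_nhds.add (tendsto_const_nhds.div_atTop hu)
  rw [add_zero] at h1
  refine h1.congr' ?_
  filter_upwards [hu.eventually_gt_atTop 0] with m hm
  field_simp

theorem tendsto_asc_div (u : ℕ → ℝ) (hu : Tendsto u atTop atTop) (k : ℝ) (n : ℕ) :
    Tendsto (fun m => Polynomial.eval (u m + k) (ascPochhammer ℝ n) / u m ^ n) atTop
      (nhds 1) := by
  induction n with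
  | zero => simp
  | succ n ih =>
    have h := ih.mul (tendsto_shift_div u hu (k + n))
    rw [one_mul] at h
    refine h.congr fun m => ?_
    rw [ascPochhammer_succ_eval, pow_succ, div_mul_div_comm, add_assoc]

theorem tendsto_prod_shift (u : ℕ → ℝ) (hu : Tendsto u atTop atTop) (s : Finset ℕ)
    (k : ℕ → ℝ) :
    Tendsto (fun m => (∏ i ∈ s, (u m + k i)) / u m ^ s.card) atTop (nhds 1) := by
  have h := tendsto_finset_prod s (fun i _ => tendsto_shift_div u hu (k i))
  simpa [Finset.prod_div_distrib] using h

theorem sum_hook (c e : ℕ) :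
    ∑ i ∈ Finset.Icc 1 (e + 1), (if i = 1 then c else 1) = c + e := by
  induction e with
  | zero => simp
  | succ n ih => rw [Finset.sum_Icc_succ_top (by omega), ih]; simp; omega

theorem tendsto_hookPoch (p : ℕ → ℕ) (hp : Tendsto (fun m => (p m : ℝ)) atTop atTop)
    (c e : ℕ) :
    Tendsto (fun m => hookPoch (p m) c e / (p m : ℝ) ^ (c + e)) atTop (nhds 1) := by
  have h := tendsto_finset_prod (Finset.Icc 1 (e + 1)) (fun i _ =>
    tendsto_asc_div _ hp (-(i : ℝ) + 1) (if i = 1 then c else 1))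
  rw [Finset.prod_const_one] at h
  refine h.congr fun m => ?_
  rw [Finset.prod_div_distrib, Finset.prod_pow_eq_pow_sum, sum_hook, hookPoch]
  congr 1
  refine Finset.prod_congr rfl fun i _ => ?_
  congr 1
  ring

theorem tendsto_hookC (a b c e : ℕ) (hc : 1 ≤ c) (u : ℕ → ℝ) (hu : Tendsto u atTop atTop) :
    Tendsto (fun m => hookC a b c e (u m) / u m ^ (c + e)) atTop (nhds 1) := by
  have h := ((tendsto_shift_div u hu (((a : ℝ) * ((a : ℝ) - 1) - (b : ℝ) * ((b : ℝ) + 1)) /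
    ((a : ℝ) + (b : ℝ)))).mul (tendsto_prod_shift u hu (Finset.Icc 2 c)
      (fun i => (a : ℝ) + (i : ℝ) - 2))).mul
      (tendsto_prod_shift u hu (Finset.Icc 1 e) (fun i => -(b : ℝ) - (i : ℝ)))
  rw [one_mul, one_mul] at h
  refine h.congr fun m => ?_
  rw [div_mul_div_comm, div_mul_div_comm, hookC]
  congr 1
  · congr 1
    · congr 1
      exact Finset.prod_congr rfl fun i _ => by ring
    · exact Finset.prod_congr rfl fun i _ => by ring
  · rw [← pow_succ', ← pow_add]
    congr 1
    simp
    omega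

/-- Let `a ≥ 1`, `b ≥ 0`, `1 ≤ c ≤ a`, `0 ≤ e ≤ b` and `τ = (a, 1^b)`, `μ = (c, 1^e)`.
If `m ≤ p(m) ≤ d(m)` and `p(m)/d(m) → θ ∈ (0,1)`, then
`(-1)^{c+e} binom(τ,μ) C_μ^τ(d(m)) / ∏_{i=1}^{e+1} (p(m) - i + 1)_{μ_i}
  → (-1/θ)^{c+e} binom(τ,μ)` as `m → ∞`. -/
theorem hook_coefficient_limit (a b c e : ℕ) (ha : 1 ≤ a) (hc1 : 1 ≤ c) (hca : c ≤ a)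
    (heb : e ≤ b) (p d : ℕ → ℕ) (hpm : ∀ m, m ≤ p m) (hpd : ∀ m, p m ≤ d m)
    (θ : ℝ) (hθ0 : 0 < θ) (hθ1 : θ < 1)
    (hlim : Tendsto (fun m => (p m : ℝ) / (d m : ℝ)) atTop (nhds θ)) :
    Tendsto
      (fun m => (-1 : ℝ) ^ (c + e) * hookBinom a b c e * hookC a b c e (d m) /
        hookPoch (p m) c e)
      atTop (nhds ((-1 / θ) ^ (c + e) * hookBinom a b c e)) := by
  have hp : Tendsto (fun m => (p m : ℝ)) atTop atTop :=
    tendsto_natCast_atTop_atTop.comp (tendsto_atTop_mono hpm tendsto_id)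
  have hd : Tendsto (fun m => (d m : ℝ)) atTop atTop :=
    tendsto_natCast_atTop_atTop.comp
      (tendsto_atTop_mono (fun m => (hpm m).trans (hpd m)) tendsto_id)
  have h := ((((tendsto_hookC a b c e hc1 _ hd).div (tendsto_hookPoch p hp c e)
    one_ne_zero).mul ((hlim.inv₀ hθ0.ne').pow (c + e))).const_mul
      ((-1 : ℝ) ^ (c + e) * hookBinom a b c e))
  have e1 : (-1 : ℝ) ^ (c + e) * hookBinom a b c e * (1 / 1 * θ⁻¹ ^ (c + e)) =
      (-1 / θ) ^ (c + e) * hookBinom a b c e := by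
    rw [div_eq_mul_inv (-1) θ, mul_pow]; ring
  rw [e1] at h
  refine h.congr' ?_
  filter_upwards [hp.eventually_gt_atTop 0, hd.eventually_gt_atTop 0] with m h1 h2
  simp only [Pi.div_apply]
  rw [inv_div, div_pow, mul_div_assoc]
  congr 1
  have h3 : (p m : ℝ) ^ (c + e) ≠ 0 := by positivity
  have h4 : (d m : ℝ) ^ (c + e) ≠ 0 := by positivity
  generalize (p m : ℝ) ^ (c + e) = P at *
  generalize (d m : ℝ) ^ (c + e) = D at *
  by_cases h5 : hookPoch (p m) c e = 0
  · simp [h5]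
  · field_simp
end

section
/- Let a ≥ 1 and b ≥ 0 be integers and set τ = (a,1^b). Let p, d : ℕ → ℕ be sequences with m ≤ p(m) ≤ d(m) for all m and lim_{m→∞} p(m)/d(m) = θ ∈ (0,1). Then lim_{m→∞} [ 1 + ∑_{c=1}^a ∑_{e=0}^b (−1)^{c+e} · binom(τ,(c,1^e)) · C_{(c,1^e)}^τ(d(m)) / ∏_{i=1}^{e+1} (p(m) − i + 1)_{ν_i} ] = (1 − 1/θ)^{a+b}, where ν = (c,1^e) (so ν_1 = c, ν_2 = ⋯ = ν_{e+1} = 1) and (z)_n = z(z+1)⋯(z+n−1) denotes the rising factorial. -/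
open Filter

lemma aux_lin (k : ℝ) : Tendsto (fun x : ℝ => (x + k) / x) atTop (nhds 1) := by
  have h : Tendsto (fun x : ℝ => 1 + k / x) atTop (nhds (1 + 0)) :=
    tendsto_const_nhds.add (tendsto_const_nhds.div_atTop tendsto_id)
  rw [add_zero] at h
  refine h.congr' ?_
  filter_upwards [eventually_gt_atTop 0] with x hx
  field_simp

lemma aux_hookC (a b c e : ℕ) (hc : 1 ≤ c) :
    Tendsto (fun x : ℝ => hookC a b c e x / x ^ (c + e)) atTop (nhds 1) := by
  have h1 := aux_lin (((a : ℝ) * ((a : ℝ) - 1) - (b : ℝ) * ((b : ℝ) + 1)) / ((a : ℝ) + (b : ℝ)))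
  have h2 : Tendsto (fun x : ℝ => ∏ i ∈ Finset.Icc 2 c, ((x + ((a : ℝ) + (i : ℝ) - 2)) / x))
      atTop (nhds (∏ i ∈ Finset.Icc 2 c, 1)) :=
    tendsto_finsetProd _ fun i _ => aux_lin _
  have h3 : Tendsto (fun x : ℝ => ∏ i ∈ Finset.Icc 1 e, ((x + (- (b : ℝ) - (i : ℝ))) / x))
      atTop (nhds (∏ i ∈ Finset.Icc 1 e, 1)) :=
    tendsto_finsetProd _ fun i _ => aux_lin _
  have h := (h1.mul h2).mul h3
  simp only [Finset.prod_const_one, mul_one] at h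
  refine h.congr fun x => ?_
  obtain ⟨c, rfl⟩ : ∃ k, c = k + 1 := ⟨c - 1, by omega⟩
  have e1 : ∀ i : ℕ, x + ((a : ℝ) + (i : ℝ) - 2) = x + a + i - 2 := fun i => by ring
  have e2 : ∀ i : ℕ, x + (- (b : ℝ) - (i : ℝ)) = x - b - i := fun i => by ring
  simp only [hookC, Finset.prod_div_distrib, Finset.prod_const, Nat.card_Icc, e1, e2]
  rw [div_mul_div_comm, div_mul_div_comm]
  congr 1
  rw [show c + 1 + 1 - 2 = c by omega, show e + 1 - 1 = e by omega]
  ring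

lemma aux_asc (n : ℕ) :
    Tendsto (fun x : ℝ => Polynomial.eval x (ascPochhammer ℝ n) / x ^ n) atTop (nhds 1) := by
  induction n with
  | zero => simp
  | succ n ih =>
    have h := ih.mul (aux_lin n)
    rw [mul_one] at h
    refine h.congr fun x => ?_
    rw [ascPochhammer_succ_eval, pow_succ, div_mul_div_comm]

lemma aux_poch (c e : ℕ) :
    Tendsto (fun p : ℕ => hookPoch p c e / (p : ℝ) ^ (c + e)) atTop (nhds 1) := by
  induction e with
  | zero =>
    refine ((aux_asc c).comp tendsto_natCast_atTop_atTop).congr fun p => ?_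
    simp [hookPoch]
  | succ e ih =>
    have h := ih.mul ((aux_lin (-(e : ℝ) - 1)).comp tendsto_natCast_atTop_atTop)
    rw [mul_one] at h
    refine h.congr fun p => ?_
    have : hookPoch p c (e + 1) = hookPoch p c e * ((p : ℝ) + (-(e : ℝ) - 1)) := by
      unfold hookPoch
      rw [Finset.prod_Icc_succ_top (by omega)]
      congr 1
      rw [if_neg (by omega)]
      simp
      ring
    rw [this, ← add_assoc, pow_succ, Function.comp_apply, div_mul_div_comm]

lemma aux_binom (n b j e : ℕ) (hj : j ≤ n) (he : e ≤ b) :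
    hookBinom (n + 1) b (j + 1) e =
      (n.choose j : ℝ) * (b.choose e : ℝ) * ((n + 1 + b : ℝ) / (j + 1 + e : ℝ)) := by
  unfold hookBinom
  rw [show n + 1 - (j + 1) = n - j by omega, show n + 1 - 1 = n by omega,
    Nat.choose_symm hj, Nat.choose_symm he]
  have : (j + 1 + e : ℝ) ≠ 0 := by positivity
  push_cast
  field_simp
  ring

lemma aux_sum (n b : ℕ) (x : ℝ) :
    1 + ∑ j ∈ Finset.range (n + 1), ∑ e ∈ Finset.range (b + 1),
      (n.choose j : ℝ) * (b.choose e : ℝ) * ((n + 1 + b : ℝ) / (j + 1 + e : ℝ)) * x ^ (j + 1 + e)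
      = (1 + x) ^ (n + 1 + b) := by
  set F : ℝ → ℝ := fun x => (1 + ∑ j ∈ Finset.range (n + 1), ∑ e ∈ Finset.range (b + 1),
      (n.choose j : ℝ) * (b.choose e : ℝ) * ((n + 1 + b : ℝ) / (j + 1 + e : ℝ))
        * x ^ (j + 1 + e)) - (1 + x) ^ (n + 1 + b) with hF
  have hd : ∀ y, HasDerivAt F 0 y := by
    intro y
    have h1 : HasDerivAt (fun x : ℝ => ∑ j ∈ Finset.range (n + 1), ∑ e ∈ Finset.range (b + 1),
        (n.choose j : ℝ) * (b.choose e : ℝ) * ((n + 1 + b : ℝ) / (j + 1 + e : ℝ))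
          * x ^ (j + 1 + e))
        (∑ j ∈ Finset.range (n + 1), ∑ e ∈ Finset.range (b + 1),
        (n.choose j : ℝ) * (b.choose e : ℝ) * ((n + 1 + b : ℝ) / (j + 1 + e : ℝ))
          * (((j + 1 + e : ℕ) : ℝ) * y ^ (j + 1 + e - 1))) y :=
      HasDerivAt.fun_sum fun j _ => HasDerivAt.fun_sum fun e _ =>
        (hasDerivAt_pow (j + 1 + e) y).const_mul _
    have h2 : HasDerivAt (fun x : ℝ => (1 + x) ^ (n + 1 + b))
        (((n + 1 + b : ℕ) : ℝ) * (1 + y) ^ (n + 1 + b - 1) * 1) y :=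
      ((hasDerivAt_id y).const_add 1).pow (n + 1 + b)
    have h := (h1.const_add 1).sub h2
    refine h.congr_deriv ?_
    rw [sub_eq_zero]
    rw [show n + 1 + b - 1 = n + b by omega, pow_add, add_comm 1 y, add_pow, add_pow,
      Finset.sum_mul_sum, mul_one, Finset.mul_sum]
    refine Finset.sum_congr rfl fun j _ => ?_
    rw [Finset.mul_sum]
    refine Finset.sum_congr rfl fun e _ => ?_
    rw [show j + 1 + e - 1 = j + e by omega]
    have : (j + 1 + e : ℝ) ≠ 0 := by positivity
    push_cast
    field_simp
    simp
    ring
  have hc := is_const_of_deriv_eq_zero (fun y => (hd y).differentiableAt)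
    (fun y => (hd y).deriv) x 0
  have h0 : F 0 = 0 := by simp [hF]
  rw [h0] at hc
  exact sub_eq_zero.1 hc

/-- Let `a ≥ 1`, `b ≥ 0` and `τ = (a, 1^b)`.  If `m ≤ p(m) ≤ d(m)` and
`p(m)/d(m) → θ ∈ (0,1)`, then
`1 + ∑_{c=1}^a ∑_{e=0}^b (-1)^{c+e} binom(τ,(c,1^e)) C_{(c,1^e)}^τ(d(m))
    / ∏_{i=1}^{e+1} (p(m) - i + 1)_{ν_i}  →  (1 - 1/θ)^{a+b}` as `m → ∞`,
i.e. the value at `1^m` of the normalized symmetric Jacobi polynomial `U_τ` tends to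
`(1 - 1/θ)^{|τ|}`. -/
theorem jacobi_special_value_limit (a b : ℕ) (ha : 1 ≤ a)
    (p d : ℕ → ℕ) (hpm : ∀ m, m ≤ p m) (hpd : ∀ m, p m ≤ d m)
    (θ : ℝ) (hθ0 : 0 < θ) (hθ1 : θ < 1)
    (hlim : Tendsto (fun m => (p m : ℝ) / (d m : ℝ)) atTop (nhds θ)) :
    Tendsto
      (fun m => 1 + ∑ c ∈ Finset.Icc 1 a, ∑ e ∈ Finset.range (b + 1),
        (-1 : ℝ) ^ (c + e) * hookBinom a b c e * hookC a b c e (d m) / hookPoch (p m) c e)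
      atTop (nhds ((1 - 1 / θ) ^ (a + b))) := by
  have hp : Tendsto p atTop atTop := tendsto_atTop_mono hpm tendsto_id
  have hd : Tendsto d atTop atTop := tendsto_atTop_mono hpd hp
  have hdR : Tendsto (fun m => (d m : ℝ)) atTop atTop := tendsto_natCast_atTop_atTop.comp hd
  have key : ∀ c ∈ Finset.Icc 1 a, ∀ e, Tendsto
      (fun m => hookC a b c e (d m) / hookPoch (p m) c e) atTop (nhds ((1 / θ) ^ (c + e))) := by
    intro c hc e
    have hc1 := (Finset.mem_Icc.1 hc).1
    have h1 := (aux_hookC a b c e hc1).comp hdR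
    have h2 := (aux_poch c e).comp hp
    have h3 := (hlim.inv₀ hθ0.ne').pow (c + e)
    have h := (h1.div h2 one_ne_zero).mul h3
    rw [div_one, one_mul, ← one_div] at h
    refine h.congr' ?_
    filter_upwards [hp.eventually_gt_atTop 0, hd.eventually_gt_atTop 0] with m h1 h2
    have h1 : (p m : ℝ) ≠ 0 := by positivity
    have h2 : (d m : ℝ) ≠ 0 := by positivity
    simp only [Function.comp_apply, Pi.div_apply, inv_div, div_pow]
    have h1 := pow_ne_zero (c + e) h1
    have h2 := pow_ne_zero (c + e) h2
    generalize (p m : ℝ) ^ (c + e) = P at *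
    generalize (d m : ℝ) ^ (c + e) = D at *
    rw [div_div_div_eq, div_mul_div_comm,
      show hookC a b c e (d m) * P * D = (P * D) * hookC a b c e (d m) by ring,
      show D * hookPoch (p m) c e * P = (P * D) * hookPoch (p m) c e by ring,
      mul_div_mul_left _ _ (mul_ne_zero h1 h2)]
  have lim : Tendsto
      (fun m => 1 + ∑ c ∈ Finset.Icc 1 a, ∑ e ∈ Finset.range (b + 1),
        (-1 : ℝ) ^ (c + e) * hookBinom a b c e * hookC a b c e (d m) / hookPoch (p m) c e)
      atTop (nhds (1 + ∑ c ∈ Finset.Icc 1 a, ∑ e ∈ Finset.range (b + 1),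
        (-1 : ℝ) ^ (c + e) * hookBinom a b c e * (1 / θ) ^ (c + e))) := by
    refine tendsto_const_nhds.add (tendsto_finsetSum _ fun c hc => tendsto_finsetSum _ fun e _ => ?_)
    simp only [mul_div_assoc _ (hookC _ _ _ _ _)]
    exact (key c hc e).const_mul _
  convert lim using 2
  obtain ⟨n, rfl⟩ : ∃ k, a = k + 1 := ⟨a - 1, by omega⟩
  rw [sub_eq_add_neg, ← aux_sum n b (-(1 / θ)), ← Finset.Ico_add_one_right_eq_Icc,
    Finset.sum_Ico_eq_sum_range]
  congr 1
  refine Finset.sum_congr (by simp) fun j hj => Finset.sum_congr rfl fun e he => ?_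
  rw [add_comm 1 j, aux_binom n b j e (by simp at hj; omega) (by simp at he; omega),
    neg_pow (1 / θ)]
  ring
end
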